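/- In the K3 lattice L_{K3} = E8 ⊕ E8 ⊕ U ⊕ U ⊕ U of rank 22, there exists a primitive sublattice M (a ℤ-submodule with torsion-free quotient L_{K3}/M) of rank 11 such that M with the restricted form is isometric to U ⊕ D9, and the orthogonal complement M^⊥ = {x ∈ L_{K3} : x·m = 0 for all m ∈ M} with the restricted form is isometric to ⟨4⟩ ⊕ U ⊕ E8. -/

import Mathlib

open Matrix

/-- The hyperbolic plane `U`, with Gram matrix `[[0,1],[1,0]]`. -/
abbrev latU : Matrix (Fin 2) (Fin 2) ℤ := !![0, 1; 1, 0]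

/-- The negative definite even unimodular lattice `E₈` (negative of the Cartan matrix). -/
abbrev latE8 : Matrix (Fin 8) (Fin 8) ℤ :=
  !![-2,  0,  1,  0,  0,  0,  0,  0;
      0, -2,  0,  1,  0,  0,  0,  0;
      1,  0, -2,  1,  0,  0,  0,  0;
      0,  1,  1, -2,  1,  0,  0,  0;
      0,  0,  0,  1, -2,  1,  0,  0;
      0,  0,  0,  0,  1, -2,  1,  0;
      0,  0,  0,  0,  0,  1, -2,  1;
      0,  0,  0,  0,  0,  0,  1, -2]

/-- Orthogonal direct sum of two lattices (block-diagonal Gram matrix). -/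
def dsum {a b : ℕ} (A : Matrix (Fin a) (Fin a) ℤ) (B : Matrix (Fin b) (Fin b) ℤ) :
    Matrix (Fin (a + b)) (Fin (a + b)) ℤ :=
  Matrix.reindex finSumFinEquiv finSumFinEquiv (Matrix.fromBlocks A 0 0 B)

/-- The bilinear form of the lattice with Gram matrix `G` : `x ⋅ y = xᵀ G y`. -/
def bform {n : ℕ} (G : Matrix (Fin n) (Fin n) ℤ) (x y : Fin n → ℤ) : ℤ :=
  x ⬝ᵥ G.mulVec y


/-- The negative definite lattice `D₉` (negative of the Cartan matrix of `D₉`). -/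
abbrev latD9 : Matrix (Fin 9) (Fin 9) ℤ :=
  !![-2,  1,  0,  0,  0,  0,  0,  0,  0;
      1, -2,  1,  0,  0,  0,  0,  0,  0;
      0,  1, -2,  1,  0,  0,  0,  0,  0;
      0,  0,  1, -2,  1,  0,  0,  0,  0;
      0,  0,  0,  1, -2,  1,  0,  0,  0;
      0,  0,  0,  0,  1, -2,  1,  0,  0;
      0,  0,  0,  0,  0,  1, -2,  1,  1;
      0,  0,  0,  0,  0,  0,  1, -2,  0;
      0,  0,  0,  0,  0,  0,  1,  0, -2]

/-- The K3 lattice `L_{K3} = E8 ⊕ E8 ⊕ U ⊕ U ⊕ U` of rank 22. -/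
def gramK3 : Matrix (Fin 22) (Fin 22) ℤ :=
  dsum latE8 (dsum latE8 (dsum latU (dsum latU latU)))

/-- `M = U ⊕ D9`. -/
def gramM : Matrix (Fin 11) (Fin 11) ℤ := dsum latU latD9

/-- `N = ⟨4⟩ ⊕ U ⊕ E8`. -/
def gramN : Matrix (Fin 11) (Fin 11) ℤ := dsum (dsum !![(4 : ℤ)] latU) latE8

/-- Sparse matrix from a list of (row, column, entry). -/
def sp {m n : ℕ} (l : List (ℕ × ℕ × ℤ)) : Matrix (Fin m) (Fin n) ℤ := fun i j =>
  l.foldr (fun t s => if t.1 = i.val ∧ t.2.1 = j.val then t.2.2 else s) 0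

def matB : Matrix (Fin 22) (Fin 11) ℤ := sp [
  (0,3,-2),
  (1,3,-3), (1,9,1),
  (2,3,-4), (2,10,1),
  (3,3,-6), (3,8,1),
  (4,3,-5), (4,7,1),
  (5,3,-4), (5,6,1),
  (6,3,-3), (6,5,1),
  (7,3,-2), (7,4,1),
  (16,2,-1), (16,3,1),
  (17,2,1),
  (18,0,1),
  (19,1,1)]

def matC : Matrix (Fin 11) (Fin 22) ℤ := sp [
  (0,18,1),
  (1,19,1),
  (2,17,1),
  (3,16,1), (3,17,1),
  (4,7,1), (4,16,2), (4,17,2),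
  (5,6,1), (5,16,3), (5,17,3),
  (6,5,1), (6,16,4), (6,17,4),
  (7,4,1), (7,16,5), (7,17,5),
  (8,3,1), (8,16,6), (8,17,6),
  (9,1,1), (9,16,3), (9,17,3),
  (10,2,1), (10,16,4), (10,17,4)]

def matD : Matrix (Fin 22) (Fin 11) ℤ := sp [
  (0,0,-4),
  (1,0,-5),
  (2,0,-7),
  (3,0,-10),
  (4,0,-8),
  (5,0,-6),
  (6,0,-4),
  (7,0,-2),
  (8,3,1),
  (9,4,1),
  (10,5,1),
  (11,6,1),
  (12,7,1),
  (13,8,1),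
  (14,9,1),
  (15,10,1),
  (16,0,2),
  (17,0,2),
  (20,1,1),
  (21,2,1)]

def matE : Matrix (Fin 11) (Fin 22) ℤ := sp [
  (0,0,-2), (0,2,1),
  (1,20,1),
  (2,21,1),
  (3,8,1),
  (4,9,1),
  (5,10,1),
  (6,11,1),
  (7,12,1),
  (8,13,1),
  (9,14,1),
  (10,15,1)]

def matF : Matrix (Fin 22) (Fin 11) ℤ := sp [
  (0,4,-2), (0,5,-4), (0,6,-6), (0,7,-8), (0,8,-10), (0,9,-5), (0,10,-7),
  (1,4,-3), (1,5,-6), (1,6,-9), (1,7,-12), (1,8,-15), (1,9,-8), (1,10,-10),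
  (2,4,-4), (2,5,-8), (2,6,-12), (2,7,-16), (2,8,-20), (2,9,-10), (2,10,-14),
  (3,4,-6), (3,5,-12), (3,6,-18), (3,7,-24), (3,8,-30), (3,9,-15), (3,10,-20),
  (4,4,-5), (4,5,-10), (4,6,-15), (4,7,-20), (4,8,-24), (4,9,-12), (4,10,-16),
  (5,4,-4), (5,5,-8), (5,6,-12), (5,7,-15), (5,8,-18), (5,9,-9), (5,10,-12),
  (6,4,-3), (6,5,-6), (6,6,-8), (6,7,-10), (6,8,-12), (6,9,-6), (6,10,-8),
  (7,4,-2), (7,5,-3), (7,6,-4), (7,7,-5), (7,8,-6), (7,9,-3), (7,10,-4),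
  (16,2,1), (16,3,1), (16,4,2), (16,5,3), (16,6,4), (16,7,5), (16,8,6), (16,9,3), (16,10,4),
  (17,3,1), (17,4,2), (17,5,3), (17,6,4), (17,7,5), (17,8,6), (17,9,3), (17,10,4),
  (18,1,1),
  (19,0,1)]

theorem bform_mulVec {n m : ℕ} (G : Matrix (Fin n) (Fin n) ℤ) (B D : Matrix (Fin n) (Fin m) ℤ)
    (x y : Fin m → ℤ) :
    bform G (B *ᵥ x) (D *ᵥ y) = bform (Bᵀ * (G * D)) x y := by
  unfold bform
  rw [← Matrix.mulVec_mulVec, ← Matrix.mulVec_mulVec, Matrix.dotProduct_mulVec x,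
    Matrix.vecMul_transpose]

theorem range_equiv {n m : ℕ} (G : Matrix (Fin n) (Fin n) ℤ) (H : Matrix (Fin m) (Fin m) ℤ)
    (B : Matrix (Fin n) (Fin m) ℤ) (C : Matrix (Fin m) (Fin n) ℤ)
    (hC : C * B = 1) (hG : Bᵀ * (G * B) = H) :
    ∃ e : (LinearMap.range (Matrix.mulVecLin B)) ≃ₗ[ℤ] (Fin m → ℤ),
      ∀ x y : (LinearMap.range (Matrix.mulVecLin B)), bform H (e x) (e y) = bform G x y := by
  have hinj : Function.Injective (Matrix.mulVecLin B) := by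
    intro x y h
    have h2 := congrArg (fun z => C *ᵥ z) h
    simpa [Matrix.mulVec_mulVec, hC] using h2
  let e := LinearEquiv.ofInjective (Matrix.mulVecLin B) hinj
  refine ⟨e.symm, fun x y => ?_⟩
  obtain ⟨x, rfl⟩ := e.surjective x
  obtain ⟨y, rfl⟩ := e.surjective y
  rw [e.symm_apply_apply, e.symm_apply_apply]
  change _ = bform G (B *ᵥ x) (B *ᵥ y)
  rw [bform_mulVec, hG]

theorem hCB : matC * matB = 1 := by decide +kernel
theorem hED : matE * matD = 1 := by decide +kernel
theorem hBB : matBᵀ * (gramK3 * matB) = gramM := by decide +kernel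
theorem hDD : matDᵀ * (gramK3 * matD) = gramN := by decide +kernel
theorem hDB : matDᵀ * (gramK3 * matB) = 0 := by decide +kernel
theorem hF : matD * matE + matF * (gramK3 * matB)ᵀ = 1 := by decide +kernel

/-- There is a primitive rank-11 sublattice `M` of the K3 lattice isometric to `U ⊕ D9`
whose orthogonal complement `M^⊥` is isometric to `⟨4⟩ ⊕ U ⊕ E8`. -/
theorem exists_primitive_UD9_in_K3 :
    ∃ M : Submodule ℤ (Fin 22 → ℤ),
      (∀ c : ℤ, c ≠ 0 → ∀ x, c • x ∈ M → x ∈ M) ∧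
      (∃ e : M ≃ₗ[ℤ] (Fin 11 → ℤ),
        ∀ x y : M, bform gramM (e x) (e y) = bform gramK3 x y) ∧
      ∃ W : Submodule ℤ (Fin 22 → ℤ),
        (∀ x, x ∈ W ↔ ∀ m ∈ M, bform gramK3 x m = 0) ∧
        ∃ f : W ≃ₗ[ℤ] (Fin 11 → ℤ),
          ∀ x y : W, bform gramN (f x) (f y) = bform gramK3 x y := by
  refine ⟨LinearMap.range (Matrix.mulVecLin matB), ?_, range_equiv _ _ _ _ hCB hBB,
    LinearMap.range (Matrix.mulVecLin matD), ?_, range_equiv _ _ _ _ hED hDD⟩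
  · rintro c hc x ⟨y, hy⟩
    rw [Matrix.mulVecLin_apply] at hy
    refine ⟨matC *ᵥ x, ?_⟩
    rw [Matrix.mulVecLin_apply]
    have h1 : y = c • (matC *ᵥ x) := by
      rw [← Matrix.mulVec_smul, ← hy, Matrix.mulVec_mulVec, hCB, Matrix.one_mulVec]
    rw [h1, Matrix.mulVec_smul] at hy
    exact smul_right_injective _ hc hy
  · intro x
    constructor
    · rintro ⟨y, rfl⟩ m ⟨z, rfl⟩
      rw [Matrix.mulVecLin_apply, Matrix.mulVecLin_apply, bform_mulVec, hDB]
      simp [bform]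
    · intro h
      have h0 : (gramK3 * matB)ᵀ *ᵥ x = 0 := by
        funext j
        have hj := h (matB *ᵥ Pi.single j 1) ⟨_, rfl⟩
        unfold bform at hj
        rw [Matrix.mulVec_mulVec, Matrix.dotProduct_mulVec, dotProduct_single_one] at hj
        rw [Matrix.mulVec_transpose]
        exact hj
      refine ⟨matE *ᵥ x, ?_⟩
      have h1 := congrArg (fun A => A *ᵥ x) hF
      simp only [Matrix.add_mulVec, ← Matrix.mulVec_mulVec, h0, Matrix.mulVec_zero, add_zero,
        Matrix.one_mulVec] at h1
      exact h1
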